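/- Let [ξ, ξ'] = {ξ + λe^J : 0 ≤ λ ≤ μ} and [ξ', ξ''] = {ξ' + λe^{J'} : 0 ≤ λ ≤ μ'} be two consecutive ordinary segments of the tropical edge E_K. Then: (i) B(ξ',J') ⊆ B(ξ,J); (ii) argmax_j(W⁺_{ij}+ξ'_j) = argmax_j(W⁺_{ij}+ξ_j) for all i ∈ Λ(ξ',J'); (iii) Λ(ξ',J') = {i ∈ Λ(ξ,J) : μ < λ⁺_i(ξ,J) and argmax_j(W⁺_{ij}+ξ_j) ∩ (J'∖J) = ∅}; (iv) for all i ∈ Λ(ξ',J') ∪ B(ξ',J'): Wᵢ⁺⊙ξ' = Wᵢ⁺⊙ξ, λ⁺_i(ξ',J') = min(λ⁺_i(ξ,J) − μ, (Wᵢ⁺⊙ξ) − max_{j∈J'∖J}(W⁺_{ij}+ξ_j)), and λ⁻_i(ξ',J') = min(λ⁻_i(ξ,J) − μ, (Wᵢ⁺⊙ξ) − max_{j∈J'∖J}(W⁻_{ij}+ξ_j)). -/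

import Mathlib

open scoped Classical

noncomputable section

/-- The tropical semiring `ℝ ∪ {−∞}` with max as addition, + as multiplication. -/
abbrev TT : Type := WithBot ℝ

/-- Tropical dot product `max_j (a j + x j)`. -/
def tdot {n : ℕ} (a x : Fin n → TT) : TT :=
  Finset.univ.sup fun j => a j + x j

/-- Tropical permanent of a square matrix over `TT`. -/
def tper {q : ℕ} (M : Fin q → Fin q → TT) : TT :=
  Finset.univ.sup fun σ : Equiv.Perm (Fin q) => ∑ i, M i (σ i)

/-- A square tropical matrix is tropically singular. -/
def TropSingular {q : ℕ} (M : Fin q → Fin q → TT) : Prop :=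
  tper M = ⊥ ∨ ∃ σ π : Equiv.Perm (Fin q), σ ≠ π ∧
    (∑ i, M i (σ i)) = tper M ∧ (∑ i, M i (π i)) = tper M

/-- An (unsigned) tropical matrix is tropically generic. -/
def TropGeneric {m n : ℕ} (M : Fin m → Fin n → TT) : Prop :=
  ∀ (q : ℕ) (r : Fin q → Fin m) (c : Fin q → Fin n),
    Function.Injective r → Function.Injective c →
    tper (fun i j => M (r i) (c j)) = ⊥ ∨ ¬ TropSingular (fun i j => M (r i) (c j))

/-- sign of an entry of a signed tropical matrix. -/
def esign (ap an : TT) : ℤ :=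
  if ap ≠ ⊥ then 1 else if an ≠ ⊥ then -1 else 0

/-- A signed square tropical matrix (pair of matrices) is tropically sign singular. -/
def TropSignSingular {q : ℕ} (Mp Mn : Fin q → Fin q → TT) : Prop :=
  tper (fun i j => max (Mp i j) (Mn i j)) = ⊥ ∨
  ∃ σ π : Equiv.Perm (Fin q),
    (∑ i, max (Mp i (σ i)) (Mn i (σ i))) = tper (fun i j => max (Mp i j) (Mn i j)) ∧
    (∑ i, max (Mp i (π i)) (Mn i (π i))) = tper (fun i j => max (Mp i j) (Mn i j)) ∧
    ((Equiv.Perm.sign σ : ℤ) * ∏ i, esign (Mp i (σ i)) (Mn i (σ i)))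
      ≠ ((Equiv.Perm.sign π : ℤ) * ∏ i, esign (Mp i (π i)) (Mn i (π i)))

/-- A signed tropical matrix is tropically sign generic. -/
def TropSignGeneric {m n : ℕ} (Mp Mn : Fin m → Fin n → TT) : Prop :=
  ∀ (q : ℕ) (r : Fin q → Fin m) (c : Fin q → Fin n),
    Function.Injective r → Function.Injective c →
    tper (fun i j => max (Mp (r i) (c j)) (Mn (r i) (c j))) = ⊥ ∨
    ¬ TropSignSingular (fun i j => Mp (r i) (c j)) (fun i j => Mn (r i) (c j))

/-- Tropical polyhedron `P(A,b)` given by a signed matrix/vector. -/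
def tropP {m n : ℕ} (Ap An : Fin m → Fin n → TT) (bp bn : Fin m → TT) :
    Set (Fin n → TT) :=
  {x | ∀ i, max (tdot (An i) x) (bn i) ≤ max (tdot (Ap i) x) (bp i)}


section Tangent

variable {m n : ℕ} (Wp Wn : Fin m → Fin (n + 1) → TT)

/-- Real vector viewed inside `T^{n+1}`. -/
def toT (x : Fin (n + 1) → ℝ) : Fin (n + 1) → TT := fun j => (x j : TT)

/-- Modulus of the signed matrix `W`. -/
def tmod : Fin m → Fin (n + 1) → TT := fun i j => max (Wp i j) (Wn i j)

/-- `i` is a hyperplane node of the tangent graph at `x`. -/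
def isHypNode (x : Fin (n + 1) → ℝ) (i : Fin m) : Prop :=
  tdot (Wp i) (toT x) = tdot (Wn i) (toT x) ∧ ⊥ < tdot (Wp i) (toT x)

/-- There is an edge between hyperplane node `i` and coordinate node `j`
in the tangent graph at `x`. -/
def isTEdge (x : Fin (n + 1) → ℝ) (i : Fin m) (j : Fin (n + 1)) : Prop :=
  isHypNode Wp Wn x i ∧ tmod Wp Wn i j + (x j : TT) = tdot (tmod Wp Wn i) (toT x)

/-- Vertices of the tangent (di)graph: hyperplane nodes on the left,
coordinate nodes on the right. -/
abbrev TGV (m n : ℕ) : Type := Sum (Fin m) (Fin (n + 1))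

/-- The (undirected) tangent graph at `x`. -/
def tangentGraph (x : Fin (n + 1) → ℝ) : SimpleGraph (TGV m n) :=
  SimpleGraph.fromRel fun u v =>
    match u, v with
    | Sum.inl i, Sum.inr j => isTEdge Wp Wn x i j
    | _, _ => False

/-- The arc relation of the tangent digraph at `x`: the edge between `i` and
`j` is directed from `j` to `i` when `W_{ij}` is tropically positive, and from
`i` to `j` when it is tropically negative. -/
def arcRel (x : Fin (n + 1) → ℝ) : TGV m n → TGV m n → Prop := fun u v =>
  match u, v with
  | Sum.inr j, Sum.inl i => isTEdge Wp Wn x i j ∧ Wp i j ≠ ⊥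
  | Sum.inl i, Sum.inr j => isTEdge Wp Wn x i j ∧ Wn i j ≠ ⊥
  | _, _ => False

end Tangent

section Pivot

variable {m n : ℕ}

/-- The tropical cone `C = {x : Wᵢ⁺⊙x ≥ Wᵢ⁻⊙x for all i}`. -/
def coneC (Wp Wn : Fin m → Fin (n + 1) → TT) : Set (Fin (n + 1) → TT) :=
  {x | ∀ i, tdot (Wn i) x ≤ tdot (Wp i) x}

/-- The `i`-th s-hyperplane `Hᵢ`. -/
def hypHS (Wp Wn : Fin m → Fin (n + 1) → TT) (i : Fin m) : Set (Fin (n + 1) → TT) :=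
  {x | tdot (Wp i) x = tdot (Wn i) x}

/-- The `i`-th half-space `Hᵢ^≥`. -/
def halfHS (Wp Wn : Fin m → Fin (n + 1) → TT) (i : Fin m) : Set (Fin (n + 1) → TT) :=
  {x | tdot (Wn i) x ≤ tdot (Wp i) x}

/-- The tropical edge `E_K = ⋂_{i ∈ K} Hᵢ ∩ C` (as a set). -/
def edgeEK (Wp Wn : Fin m → Fin (n + 1) → TT) (K : Finset (Fin m)) :
    Set (Fin (n + 1) → TT) :=
  {x | (∀ i ∈ K, x ∈ hypHS Wp Wn i) ∧ x ∈ coneC Wp Wn}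

/-- Indicator vector `e^J` of `J ⊆ [n+1]`. -/
def eJ (J : Finset (Fin (n + 1))) : Fin (n + 1) → ℝ := fun j => if j ∈ J then 1 else 0

/-- `e^J` (with `∅ ⊊ J ⊊ [n+1]`) is a feasible direction from `x` in `D`. -/
def Feasible (D : Set (Fin (n + 1) → TT)) (x : Fin (n + 1) → ℝ)
    (J : Finset (Fin (n + 1))) : Prop :=
  J ≠ ∅ ∧ J ≠ Finset.univ ∧
    ∃ μ : ℝ, 0 < μ ∧ ∀ lam : ℝ, 0 ≤ lam → lam ≤ μ → toT (x + lam • eJ J) ∈ D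

/-- `{ξ + λ e^J : 0 ≤ λ ≤ μ}` is an ordinary segment of the tropical edge
`E_K`: it is contained in `E_K` and is maximal in the direction `e^J`. -/
def IsOrdSeg (Wp Wn : Fin m → Fin (n + 1) → TT) (K : Finset (Fin m))
    (ξ : Fin (n + 1) → ℝ) (J : Finset (Fin (n + 1))) (μ : ℝ) : Prop :=
  0 < μ ∧ J ≠ ∅ ∧ J ≠ Finset.univ ∧
  (∀ lam : ℝ, 0 ≤ lam → lam ≤ μ → toT (ξ + lam • eJ J) ∈ edgeEK Wp Wn K) ∧
  (∀ ε : ℝ, 0 < ε → toT (ξ - ε • eJ J) ∉ edgeEK Wp Wn K) ∧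
  (∀ ε : ℝ, 0 < ε → toT (ξ + (μ + ε) • eJ J) ∉ edgeEK Wp Wn K)

/-- `x` is a breakpoint of `E_K`: an intermediate endpoint shared by two
consecutive ordinary segments. -/
def IsBreakpoint (Wp Wn : Fin m → Fin (n + 1) → TT) (K : Finset (Fin m))
    (x : Fin (n + 1) → ℝ) : Prop :=
  ∃ ξ J μ, IsOrdSeg Wp Wn K ξ J μ ∧ x = ξ + μ • eJ J ∧
    ∃ J' μ', IsOrdSeg Wp Wn K x J' μ' ∧ J ⊂ J'

/-- `x` lies in the relative interior of an ordinary segment of `E_K`. -/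
def InRelIntSeg (Wp Wn : Fin m → Fin (n + 1) → TT) (K : Finset (Fin m))
    (x : Fin (n + 1) → ℝ) : Prop :=
  ∃ ξ J μ, IsOrdSeg Wp Wn K ξ J μ ∧ ∃ lam : ℝ, 0 < lam ∧ lam < μ ∧ x = ξ + lam • eJ J

/-- Embedding of `TT = ℝ ∪ {−∞}` into `EReal`. -/
def tE : TT → EReal := WithBot.recBotCoe ⊥ (fun r => (r : EReal))

/-- `λ⁺_i(ξ,J) = (Wᵢ⁺⊙ξ) − max_{j∈J}(W⁺_{ij} + ξ_j)`, with `−(−∞) = +∞`. -/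
def lamP (Wp : Fin m → Fin (n + 1) → TT) (i : Fin m) (ξ : Fin (n + 1) → ℝ)
    (J : Finset (Fin (n + 1))) : EReal :=
  tE (tdot (Wp i) (toT ξ)) - tE (J.sup fun j => Wp i j + (ξ j : TT))

/-- `λ⁻_i(ξ,J) = (Wᵢ⁺⊙ξ) − max_{j∈J}(W⁻_{ij} + ξ_j)`, with `−(−∞) = +∞`. -/
def lamM (Wp Wn : Fin m → Fin (n + 1) → TT) (i : Fin m) (ξ : Fin (n + 1) → ℝ)
    (J : Finset (Fin (n + 1))) : EReal :=
  tE (tdot (Wp i) (toT ξ)) - tE (J.sup fun j => Wn i j + (ξ j : TT))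

/-- `argmax(Wᵢ⁺⊙ξ)`. -/
def argmaxP (Wp : Fin m → Fin (n + 1) → TT) (i : Fin m) (ξ : Fin (n + 1) → ℝ) :
    Set (Fin (n + 1)) :=
  {j | Wp i j + (ξ j : TT) = tdot (Wp i) (toT ξ)}

/-- `argmax(Wᵢ⁻⊙ξ)`. -/
def argmaxM (Wn : Fin m → Fin (n + 1) → TT) (i : Fin m) (ξ : Fin (n + 1) → ℝ) :
    Set (Fin (n + 1)) :=
  {j | Wn i j + (ξ j : TT) = tdot (Wn i) (toT ξ)}

/-- `Λ(ξ,J)`: candidate entering constraints. -/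
def entSet (Wp : Fin m → Fin (n + 1) → TT) (K : Finset (Fin m))
    (ξ : Fin (n + 1) → ℝ) (J : Finset (Fin (n + 1))) : Set (Fin m) :=
  {i | i ∉ K ∧ ∀ j ∈ J, j ∉ argmaxP Wp i ξ}

/-- `B(ξ,J)`: candidate breakpoint constraints. -/
def brkSet (Wp Wn : Fin m → Fin (n + 1) → TT) (K : Finset (Fin m))
    (ξ : Fin (n + 1) → ℝ) (J : Finset (Fin (n + 1))) : Set (Fin m) :=
  {i | i ∈ K ∧ (∀ j ∈ J, j ∉ argmaxP Wp i ξ) ∧ ∀ j ∈ J, j ∉ argmaxM Wn i ξ}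

/-- Coordinate nodes with an arc into hyperplane node `i`. -/
def degIn (Wp Wn : Fin m → Fin (n + 1) → TT) (x : Fin (n + 1) → ℝ) (i : Fin m) :
    Set (Fin (n + 1)) :=
  {j | arcRel Wp Wn x (Sum.inr j) (Sum.inl i)}

/-- Coordinate nodes with an arc out of hyperplane node `i`. -/
def degOut (Wp Wn : Fin m → Fin (n + 1) → TT) (x : Fin (n + 1) → ℝ) (i : Fin m) :
    Set (Fin (n + 1)) :=
  {j | arcRel Wp Wn x (Sum.inl i) (Sum.inr j)}

/-- Hyperplane node `i` has degree `(1,1)` in the tangent digraph at `x`. -/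
def deg11 (Wp Wn : Fin m → Fin (n + 1) → TT) (x : Fin (n + 1) → ℝ) (i : Fin m) : Prop :=
  (∃! j, j ∈ degIn Wp Wn x i) ∧ (∃! j, j ∈ degOut Wp Wn x i)

/-- Hyperplane node `i` has degree `(2,1)`. -/
def deg21 (Wp Wn : Fin m → Fin (n + 1) → TT) (x : Fin (n + 1) → ℝ) (i : Fin m) : Prop :=
  (degIn Wp Wn x i).ncard = 2 ∧ (∃! j, j ∈ degOut Wp Wn x i)

/-- Hyperplane node `i` has degree `(1,2)`. -/
def deg12 (Wp Wn : Fin m → Fin (n + 1) → TT) (x : Fin (n + 1) → ℝ) (i : Fin m) : Prop :=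
  (∃! j, j ∈ degIn Wp Wn x i) ∧ (degOut Wp Wn x i).ncard = 2

/-- The support of the tangent graph at `x`: all coordinate nodes together
with the hyperplane nodes. -/
def suppV (Wp Wn : Fin m → Fin (n + 1) → TT) (x : Fin (n + 1) → ℝ) : Set (TGV m n) :=
  {v | match v with
       | Sum.inl i => isHypNode Wp Wn x i
       | Sum.inr _ => True}

/-- The underlying undirected edge relation of the tangent graph. -/
def tedgeRel (Wp Wn : Fin m → Fin (n + 1) → TT) (x : Fin (n + 1) → ℝ) :
    TGV m n → TGV m n → Prop := fun u v =>
  match u, v with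
  | Sum.inl i, Sum.inr j => isTEdge Wp Wn x i j
  | _, _ => False

/-- The tangent graph with the hyperplane node `ℓ` (and its incident edges)
deleted. -/
def delNode (Wp Wn : Fin m → Fin (n + 1) → TT) (x : Fin (n + 1) → ℝ) (ℓ : Fin m) :
    SimpleGraph (TGV m n) :=
  SimpleGraph.fromRel fun u v =>
    tedgeRel Wp Wn x u v ∧ u ≠ Sum.inl ℓ ∧ v ≠ Sum.inl ℓ

/-- The tangent graph with the edge between hyperplane node `k` and coordinate
node `j` deleted. -/
def delEdge (Wp Wn : Fin m → Fin (n + 1) → TT) (x : Fin (n + 1) → ℝ) (k : Fin m)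
    (j : Fin (n + 1)) : SimpleGraph (TGV m n) :=
  SimpleGraph.fromRel fun u v =>
    tedgeRel Wp Wn x u v ∧ ¬(u = Sum.inl k ∧ v = Sum.inr j)

/-- Coordinate nodes weakly connected to hyperplane node `k` after deleting the
edge between `k` and `j`. -/
def reachJ (Wp Wn : Fin m → Fin (n + 1) → TT) (x : Fin (n + 1) → ℝ) (k : Fin m)
    (j : Fin (n + 1)) : Finset (Fin (n + 1)) :=
  Finset.univ.filter fun l => (delEdge Wp Wn x k j).Reachable (Sum.inl k) (Sum.inr l)

end Pivot

/-!
Moving from `ξ` to `ξ' = ξ + μ e^J` raises the terms of a row `w` indexed by `J` by `μ` and fixes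
the others, so `w ⊙ ξ' = max (max_{j ∈ J} (w_j + ξ_j) + μ) (w ⊙ ξ)`. Hence `J` misses the argmax at
`ξ'` exactly when `max_{j ∈ J} (w_j + ξ_j) + μ < w ⊙ ξ`, and in that case neither the maximum nor
the argmax changes. The set inclusions only compare argmaxes over `J ⊆ J'`, and the formulas for
`λ±` come from splitting the maximum over `J'` into those over `J` and `J' \ J`.
-/

section Embedding

theorem tE_strictMono : StrictMono tE := by
  intro a b hab
  induction b using WithBot.recBotCoe with
  | bot => exact absurd hab not_lt_bot
  | coe b =>
    induction a using WithBot.recBotCoe with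
    | bot => exact EReal.bot_lt_coe b
    | coe a => exact EReal.coe_lt_coe_iff.2 (WithBot.coe_lt_coe.1 hab)

theorem tE_add_coe (a : TT) (r : ℝ) : tE (a + (r : TT)) = tE a + (r : EReal) := by
  induction a using WithBot.recBotCoe with
  | bot => exact (EReal.bot_add _).symm
  | coe a => exact EReal.coe_add a r

theorem coe_lt_tE_sub_tE_iff (p s : TT) (r : ℝ) :
    (r : EReal) < tE p - tE s ↔ s + (r : TT) < p := by
  rw [EReal.lt_sub_iff_add_lt (.inr (EReal.coe_ne_top r)) (.inr (EReal.coe_ne_bot r)), add_comm,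
    ← tE_add_coe, tE_strictMono.lt_iff_lt]

theorem tE_sub_tE_add_coe (p s : TT) (r : ℝ) :
    tE p - tE (s + (r : TT)) = tE p - tE s - (r : EReal) := by
  rw [tE_add_coe, sub_eq_add_neg,
    EReal.neg_add (.inr (EReal.coe_ne_top r)) (.inr (EReal.coe_ne_bot r)), sub_eq_add_neg,
    sub_eq_add_neg, sub_eq_add_neg, add_assoc]

theorem tE_sub_tE_max (p s t : TT) : tE p - tE (max s t) = min (tE p - tE s) (tE p - tE t) :=
  Antitone.map_max (f := fun a => tE p - tE a) fun _ _ hab =>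
    EReal.sub_le_sub le_rfl (tE_strictMono.monotone hab)

end Embedding

section Row

variable {n : ℕ} {I J : Finset (Fin (n + 1))} {μ : ℝ}

theorem add_smul_eJ_apply_of_mem (ξ : Fin (n + 1) → ℝ) (μ : ℝ) {j : Fin (n + 1)} (hj : j ∈ J) :
    (ξ + μ • eJ J) j = ξ j + μ := by
  simp [eJ, hj]

theorem add_smul_eJ_apply_of_notMem (ξ : Fin (n + 1) → ℝ) (μ : ℝ) {j : Fin (n + 1)}
    (hj : j ∉ J) : (ξ + μ • eJ J) j = ξ j := by
  simp [eJ, hj]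

/-- The tropical dot product restricted to the coordinates in `J`, i.e. `max_{j ∈ J} (w_j + x_j)`,
with value `−∞` for `J = ∅`. It is the quantity subtracted in `λ±(x, J)`. -/
def tdotOn (J : Finset (Fin (n + 1))) (w : Fin (n + 1) → TT) (x : Fin (n + 1) → ℝ) : TT :=
  J.sup fun j => w j + (x j : TT)

theorem tdotOn_univ (w : Fin (n + 1) → TT) (x : Fin (n + 1) → ℝ) :
    tdotOn Finset.univ w x = tdot w (toT x) :=
  rfl

theorem le_tdot_toT (w : Fin (n + 1) → TT) (x : Fin (n + 1) → ℝ) (j : Fin (n + 1)) :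
    w j + (x j : TT) ≤ tdot w (toT x) :=
  Finset.le_sup (f := fun j => w j + toT x j) (Finset.mem_univ j)

theorem tdotOn_union (I J : Finset (Fin (n + 1))) (w : Fin (n + 1) → TT)
    (x : Fin (n + 1) → ℝ) : tdotOn (I ∪ J) w x = max (tdotOn I w x) (tdotOn J w x) :=
  Finset.sup_union

theorem tdotOn_add_smul_eJ_self (J : Finset (Fin (n + 1))) (w : Fin (n + 1) → TT)
    (ξ : Fin (n + 1) → ℝ) (μ : ℝ) :
    tdotOn J w (ξ + μ • eJ J) = tdotOn J w ξ + (μ : TT) := by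
  have hmono : Monotone fun a : TT => a + (μ : TT) := fun _ _ hab => by dsimp only; gcongr
  unfold tdotOn
  rw [Finset.apply_sup_eq_sup_comp_of_linearOrder _ hmono (WithBot.bot_add _)]
  refine Finset.sup_congr rfl fun j hj => ?_
  rw [add_smul_eJ_apply_of_mem ξ μ hj, WithBot.coe_add, Function.comp_apply, add_assoc]

theorem tdotOn_add_smul_eJ_of_disjoint (hIJ : Disjoint I J) (w : Fin (n + 1) → TT)
    (ξ : Fin (n + 1) → ℝ) (μ : ℝ) : tdotOn I w (ξ + μ • eJ J) = tdotOn I w ξ :=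
  Finset.sup_congr rfl fun _ hj => by
    rw [add_smul_eJ_apply_of_notMem ξ μ (Finset.disjoint_left.1 hIJ hj)]

theorem tdotOn_add_smul_eJ (hJI : J ⊆ I) (w : Fin (n + 1) → TT) (ξ : Fin (n + 1) → ℝ) (μ : ℝ) :
    tdotOn I w (ξ + μ • eJ J) = max (tdotOn J w ξ + (μ : TT)) (tdotOn (I \ J) w ξ) := by
  conv_lhs => rw [← Finset.union_sdiff_of_subset hJI]
  rw [tdotOn_union, tdotOn_add_smul_eJ_self,
    tdotOn_add_smul_eJ_of_disjoint Finset.sdiff_disjoint]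

theorem tdot_add_smul_eJ (J : Finset (Fin (n + 1))) (w : Fin (n + 1) → TT)
    (ξ : Fin (n + 1) → ℝ) (hμ : 0 ≤ μ) :
    tdot w (toT (ξ + μ • eJ J)) = max (tdotOn J w ξ + (μ : TT)) (tdot w (toT ξ)) := by
  have hle : tdotOn J w ξ ≤ tdotOn J w ξ + (μ : TT) :=
    le_add_of_nonneg_right (WithBot.coe_nonneg.2 hμ)
  have hsplit : tdot w (toT ξ) = max (tdotOn J w ξ) (tdotOn (Finset.univ \ J) w ξ) := by
    rw [← tdotOn_union, Finset.union_sdiff_of_subset (Finset.subset_univ J), tdotOn_univ]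
  rw [← tdotOn_univ, tdotOn_add_smul_eJ (Finset.subset_univ J), hsplit, ← max_assoc,
    max_eq_left hle]

end Row

section Argmax

variable {m n : ℕ} {W : Fin m → Fin (n + 1) → TT} {i : Fin m} {ξ : Fin (n + 1) → ℝ}
  {J : Finset (Fin (n + 1))} {μ : ℝ}

theorem forall_notMem_argmaxP_iff_tdotOn_lt (hJ : J.Nonempty) :
    (∀ j ∈ J, j ∉ argmaxP W i ξ) ↔ tdotOn J (W i) ξ < tdot (W i) (toT ξ) := by
  have hlt (j : Fin (n + 1)) :
      j ∉ argmaxP W i ξ ↔ W i j + (ξ j : TT) < tdot (W i) (toT ξ) :=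
    (le_tdot_toT (W i) ξ j).lt_iff_ne.symm
  simp only [hlt]
  refine ⟨fun h => ?_, fun h j hj => (Finset.le_sup hj).trans_lt h⟩
  obtain ⟨j, hj⟩ := hJ
  exact (Finset.sup_lt_iff (bot_le.trans_lt (h j hj))).2 h

theorem forall_notMem_argmaxP_add_smul_eJ_iff (hJ : J.Nonempty) (hμ : 0 ≤ μ) :
    (∀ j ∈ J, j ∉ argmaxP W i (ξ + μ • eJ J)) ↔
      tdotOn J (W i) ξ + (μ : TT) < tdot (W i) (toT ξ) := by
  rw [forall_notMem_argmaxP_iff_tdotOn_lt hJ, tdotOn_add_smul_eJ_self, tdot_add_smul_eJ J _ ξ hμ,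
    lt_max_iff, or_iff_right (lt_irrefl _)]

theorem tdot_add_smul_eJ_of_lt (hμ : 0 ≤ μ)
    (hlt : tdotOn J (W i) ξ + (μ : TT) < tdot (W i) (toT ξ)) :
    tdot (W i) (toT (ξ + μ • eJ J)) = tdot (W i) (toT ξ) := by
  rw [tdot_add_smul_eJ J _ ξ hμ, max_eq_right hlt.le]

theorem argmaxP_add_smul_eJ_of_lt (hμ : 0 ≤ μ)
    (hlt : tdotOn J (W i) ξ + (μ : TT) < tdot (W i) (toT ξ)) :
    argmaxP W i (ξ + μ • eJ J) = argmaxP W i ξ := by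
  ext j
  by_cases hj : j ∈ J
  · have hJ : J.Nonempty := ⟨j, hj⟩
    have hlt₀ : tdotOn J (W i) ξ < tdot (W i) (toT ξ) :=
      (le_add_of_nonneg_right (WithBot.coe_nonneg.2 hμ)).trans_lt hlt
    exact iff_of_false ((forall_notMem_argmaxP_add_smul_eJ_iff hJ hμ).2 hlt j hj)
      ((forall_notMem_argmaxP_iff_tdotOn_lt hJ).2 hlt₀ j hj)
  · simp only [argmaxP, Set.mem_ofPred_eq, tdot_add_smul_eJ_of_lt hμ hlt,
      add_smul_eJ_apply_of_notMem ξ μ hj]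

theorem argmaxP_add_smul_eJ (hJ : J.Nonempty) (hμ : 0 ≤ μ)
    (hnot : ∀ j ∈ J, j ∉ argmaxP W i (ξ + μ • eJ J)) :
    argmaxP W i (ξ + μ • eJ J) = argmaxP W i ξ :=
  argmaxP_add_smul_eJ_of_lt hμ ((forall_notMem_argmaxP_add_smul_eJ_iff hJ hμ).1 hnot)

end Argmax

section Update

variable {m n : ℕ} {Wp Wn : Fin m → Fin (n + 1) → TT} {K : Finset (Fin m)}
  {ξ : Fin (n + 1) → ℝ} {J J' : Finset (Fin (n + 1))} {μ : ℝ} {i : Fin m}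

theorem brkSet_add_smul_eJ_subset (hJ : J.Nonempty) (hμ : 0 ≤ μ) (hJJ' : J ⊆ J') :
    brkSet Wp Wn K (ξ + μ • eJ J) J' ⊆ brkSet Wp Wn K ξ J := by
  rintro i ⟨hiK, hpos, hneg⟩
  have hpos' : ∀ j ∈ J, j ∉ argmaxP Wp i (ξ + μ • eJ J) := fun j hj => hpos j (hJJ' hj)
  have hneg' : ∀ j ∈ J, j ∉ argmaxM Wn i (ξ + μ • eJ J) := fun j hj => hneg j (hJJ' hj)
  have hargM : argmaxM Wn i (ξ + μ • eJ J) = argmaxM Wn i ξ := argmaxP_add_smul_eJ hJ hμ hneg'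
  rw [argmaxP_add_smul_eJ hJ hμ hpos'] at hpos'
  rw [hargM] at hneg'
  exact ⟨hiK, hpos', hneg'⟩

theorem coe_lt_lamP_iff :
    (μ : EReal) < lamP Wp i ξ J ↔ tdotOn J (Wp i) ξ + (μ : TT) < tdot (Wp i) (toT ξ) :=
  coe_lt_tE_sub_tE_iff _ _ _

theorem entSet_add_smul_eJ (hJ : J.Nonempty) (hμ : 0 ≤ μ) (hJJ' : J ⊆ J') :
    entSet Wp K (ξ + μ • eJ J) J' =
      {i | i ∈ entSet Wp K ξ J ∧ (μ : EReal) < lamP Wp i ξ J ∧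
        ∀ j ∈ J' \ J, j ∉ argmaxP Wp i ξ} := by
  ext i
  constructor
  · rintro ⟨hiK, hnot⟩
    have hlt := (forall_notMem_argmaxP_add_smul_eJ_iff hJ hμ).1 fun j hj => hnot j (hJJ' hj)
    rw [argmaxP_add_smul_eJ_of_lt hμ hlt] at hnot
    exact ⟨⟨hiK, fun j hj => hnot j (hJJ' hj)⟩, coe_lt_lamP_iff.2 hlt,
      fun j hj => hnot j (Finset.mem_sdiff.1 hj).1⟩
  · rintro ⟨⟨hiK, hnotJ⟩, hlt, hnotJ'⟩
    refine ⟨hiK, ?_⟩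
    rw [argmaxP_add_smul_eJ_of_lt hμ (coe_lt_lamP_iff.1 hlt)]
    intro j hj
    by_cases hjJ : j ∈ J
    · exact hnotJ j hjJ
    · exact hnotJ' j (Finset.mem_sdiff.2 ⟨hj, hjJ⟩)

theorem tE_sub_tE_tdotOn_add_smul_eJ (hJJ' : J ⊆ J') (p : TT) (w : Fin (n + 1) → TT)
    (ξ : Fin (n + 1) → ℝ) (μ : ℝ) :
    tE p - tE (tdotOn J' w (ξ + μ • eJ J)) =
      min (tE p - tE (tdotOn J w ξ) - (μ : EReal)) (tE p - tE (tdotOn (J' \ J) w ξ)) := by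
  rw [tdotOn_add_smul_eJ hJJ', tE_sub_tE_max, tE_sub_tE_add_coe]

theorem lamP_add_smul_eJ (hJJ' : J ⊆ J')
    (htdot : tdot (Wp i) (toT (ξ + μ • eJ J)) = tdot (Wp i) (toT ξ)) :
    lamP Wp i (ξ + μ • eJ J) J' =
      min (lamP Wp i ξ J - (μ : EReal))
        (tE (tdot (Wp i) (toT ξ)) - tE ((J' \ J).sup fun j => Wp i j + (ξ j : TT))) := by
  rw [lamP, htdot]
  exact tE_sub_tE_tdotOn_add_smul_eJ hJJ' _ (Wp i) ξ μ

theorem lamM_add_smul_eJ (hJJ' : J ⊆ J')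
    (htdot : tdot (Wp i) (toT (ξ + μ • eJ J)) = tdot (Wp i) (toT ξ)) :
    lamM Wp Wn i (ξ + μ • eJ J) J' =
      min (lamM Wp Wn i ξ J - (μ : EReal))
        (tE (tdot (Wp i) (toT ξ)) - tE ((J' \ J).sup fun j => Wn i j + (ξ j : TT))) := by
  rw [lamM, htdot]
  exact tE_sub_tE_tdotOn_add_smul_eJ hJJ' _ (Wn i) ξ μ

end Update

theorem stmt17_general {m n : ℕ} (Wp Wn : Fin m → Fin (n + 1) → TT) (K : Finset (Fin m))
    (ξ : Fin (n + 1) → ℝ) (J : Finset (Fin (n + 1))) (hJ : J.Nonempty) (μ : ℝ) (hμ : 0 ≤ μ)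
    (ξ' : Fin (n + 1) → ℝ) (hξ' : ξ' = ξ + μ • eJ J)
    (J' : Finset (Fin (n + 1))) (hJJ' : J ⊆ J') :
    brkSet Wp Wn K ξ' J' ⊆ brkSet Wp Wn K ξ J ∧
    (∀ i ∈ entSet Wp K ξ' J', argmaxP Wp i ξ' = argmaxP Wp i ξ) ∧
    entSet Wp K ξ' J' =
      {i | i ∈ entSet Wp K ξ J ∧ (μ : EReal) < lamP Wp i ξ J ∧
        ∀ j ∈ J' \ J, j ∉ argmaxP Wp i ξ} ∧
    ∀ i, i ∈ entSet Wp K ξ' J' ∪ brkSet Wp Wn K ξ' J' →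
      tdot (Wp i) (toT ξ') = tdot (Wp i) (toT ξ) ∧
      lamP Wp i ξ' J' =
        min (lamP Wp i ξ J - (μ : EReal))
          (tE (tdot (Wp i) (toT ξ)) -
            tE ((J' \ J).sup fun j => Wp i j + (ξ j : TT))) ∧
      lamM Wp Wn i ξ' J' =
        min (lamM Wp Wn i ξ J - (μ : EReal))
          (tE (tdot (Wp i) (toT ξ)) -
            tE ((J' \ J).sup fun j => Wn i j + (ξ j : TT))) := by
  subst hξ'
  refine ⟨brkSet_add_smul_eJ_subset hJ hμ hJJ',
    fun i hi => argmaxP_add_smul_eJ hJ hμ fun j hj => hi.2 j (hJJ' hj),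
    entSet_add_smul_eJ hJ hμ hJJ', fun i hi => ?_⟩
  have hnot : ∀ j ∈ J', j ∉ argmaxP Wp i (ξ + μ • eJ J) := hi.elim And.right fun h => h.2.1
  have htdot : tdot (Wp i) (toT (ξ + μ • eJ J)) = tdot (Wp i) (toT ξ) :=
    tdot_add_smul_eJ_of_lt hμ <|
      (forall_notMem_argmaxP_add_smul_eJ_iff hJ hμ).1 fun j hj => hnot j (hJJ' hj)
  exact ⟨htdot, lamP_add_smul_eJ hJJ' htdot, lamM_add_smul_eJ hJJ' htdot⟩

/-- Incremental update of the sets `Λ`, `B` and the scalars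
`λ±` between two consecutive ordinary segments of `E_K`. -/
theorem stmt17 {m n : ℕ} (Wp Wn : Fin m → Fin (n + 1) → TT)
    (hsign : ∀ i j, min (Wp i j) (Wn i j) = ⊥)
    (hrow : ∀ i, ∃ j, max (Wp i j) (Wn i j) ≠ ⊥)
    (hgen : TropGeneric (tmod Wp Wn))
    (hfin : ∀ x ∈ coneC Wp Wn, x ≠ (fun _ => (⊥ : TT)) → ∀ j, x j ≠ ⊥)
    (K : Finset (Fin m)) (hK : K.card + 1 = n)
    (hU : ∃ (er : Fin K.card → Fin m) (ec : Fin K.card → Fin (n + 1)),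
      Function.Injective er ∧ (∀ a, er a ∈ K) ∧ Function.Injective ec ∧
      (∀ a, ec a ≠ Fin.last n) ∧ ⊥ < tper (fun a b => tmod Wp Wn (er a) (ec b)))
    (hEK : ∃ y : Fin (n + 1) → ℝ, toT y ∈ edgeEK Wp Wn K)
    (ξ : Fin (n + 1) → ℝ) (J : Finset (Fin (n + 1))) (μ : ℝ)
    (hseg : IsOrdSeg Wp Wn K ξ J μ)
    (ξ' : Fin (n + 1) → ℝ) (hξ' : ξ' = ξ + μ • eJ J)
    (J' : Finset (Fin (n + 1))) (μ' : ℝ)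
    (hseg' : IsOrdSeg Wp Wn K ξ' J' μ') (hJJ' : J ⊂ J') :
    brkSet Wp Wn K ξ' J' ⊆ brkSet Wp Wn K ξ J ∧
    (∀ i ∈ entSet Wp K ξ' J', argmaxP Wp i ξ' = argmaxP Wp i ξ) ∧
    entSet Wp K ξ' J' =
      {i | i ∈ entSet Wp K ξ J ∧ (μ : EReal) < lamP Wp i ξ J ∧
        ∀ j ∈ J' \ J, j ∉ argmaxP Wp i ξ} ∧
    ∀ i, i ∈ entSet Wp K ξ' J' ∪ brkSet Wp Wn K ξ' J' →
      tdot (Wp i) (toT ξ') = tdot (Wp i) (toT ξ) ∧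
      lamP Wp i ξ' J' =
        min (lamP Wp i ξ J - (μ : EReal))
          (tE (tdot (Wp i) (toT ξ)) -
            tE ((J' \ J).sup fun j => Wp i j + (ξ j : TT))) ∧
      lamM Wp Wn i ξ' J' =
        min (lamM Wp Wn i ξ J - (μ : EReal))
          (tE (tdot (Wp i) (toT ξ)) -
            tE ((J' \ J).sup fun j => Wn i j + (ξ j : TT))) :=
  stmt17_general Wp Wn K ξ J (Finset.nonempty_iff_ne_empty.2 hseg.2.1) μ hseg.1.le ξ' hξ'
    J' hJJ'.subset
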